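/- arXiv:1712.03000 — 6 statements merged into one kernel-verified Lean document; each statement's English description precedes it below -/
import Mathlib

section
/- Let a, b be real numbers with b ≠ 0 and let f, g ∈ L¹(ℝ, ℂ). Then the function t ↦ (f⋆g)(t) is defined almost everywhere, belongs to L¹(ℝ, ℂ), and satisfies ‖f⋆g‖₁ ≤ ‖f‖₁·‖g‖₁. -/
open MeasureTheory Filter

noncomputable def ccKernel (a b : ℝ) (f g : ℝ → ℂ) (t x : ℝ) : ℂ :=
  Complex.exp (-(Complex.I/2) * ((a:ℂ)/(b:ℂ)) * (t:ℂ)^2) *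
    Complex.exp ((Complex.I/2) * ((a:ℂ)/(b:ℂ)) * (x:ℂ)^2) * f x *
    (Complex.exp ((Complex.I/2) * ((a:ℂ)/(b:ℂ)) * ((x:ℂ)+(t:ℂ))^2) * g (x+t) +
     Complex.exp ((Complex.I/2) * ((a:ℂ)/(b:ℂ)) * ((x:ℂ)-(t:ℂ))^2) * g (x-t))

noncomputable def ccConv (a b : ℝ) (f g : ℝ → ℂ) (t : ℝ) : ℂ :=
  (1/2 : ℂ) * ∫ x : ℝ, ccKernel a b f g t x

theorem cc_norm_exp (a b s : ℝ) :
    ‖Complex.exp ((Complex.I/2) * ((a:ℂ)/(b:ℂ)) * (s:ℂ)^2)‖ = 1 := by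
  have : (Complex.I/2) * ((a:ℂ)/(b:ℂ)) * (s:ℂ)^2 = ((a / b * s^2 / 2 : ℝ) : ℂ) * Complex.I := by
    push_cast; ring
  rw [this, Complex.norm_exp_ofReal_mul_I]

theorem cc_norm_exp_neg (a b s : ℝ) :
    ‖Complex.exp (-(Complex.I/2) * ((a:ℂ)/(b:ℂ)) * (s:ℂ)^2)‖ = 1 := by
  have : -(Complex.I/2) * ((a:ℂ)/(b:ℂ)) * (s:ℂ)^2 = ((-(a / b * s^2 / 2) : ℝ) : ℂ) * Complex.I := by
    push_cast; ring
  rw [this, Complex.norm_exp_ofReal_mul_I]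

theorem cc_int_add {E : Type*} [NormedRing E] [NormedSpace ℝ E] (f g : ℝ → E) (hf : Integrable f) (hg : Integrable g) :
    Integrable (fun p : ℝ × ℝ => f p.1 * g (p.1 + p.2)) (volume.prod volume) := by
  have h := (measurePreserving_prod_add (volume : Measure ℝ) (volume : Measure ℝ)).integrable_comp_of_integrable
    (hf.mul_prod hg)
  exact h

theorem cc_int_sub {E : Type*} [NormedRing E] [NormedSpace ℝ E] (f g : ℝ → E) (hf : Integrable f) (hg : Integrable g) :
    Integrable (fun p : ℝ × ℝ => f p.1 * g (p.1 - p.2)) (volume.prod volume) := by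
  have h := ((MeasurePreserving.id (volume : Measure ℝ)).prod
    (Measure.measurePreserving_neg (volume : Measure ℝ))).integrable_comp_of_integrable
    (cc_int_add f g hf hg)
  refine h.congr (Eventually.of_forall fun p => ?_)
  simp [sub_eq_add_neg]

theorem ccConv_memL1 (a b : ℝ) (hb : b ≠ 0) (f g : ℝ → ℂ)
    (hf : Integrable f) (hg : Integrable g) :
    (∀ᵐ t : ℝ, Integrable (fun x => ccKernel a b f g t x)) ∧
    Integrable (ccConv a b f g) ∧
    (∫ t : ℝ, ‖ccConv a b f g t‖) ≤ (∫ t : ℝ, ‖f t‖) * (∫ t : ℝ, ‖g t‖) := by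
  set F : ℝ → ℂ := fun x => Complex.exp ((Complex.I/2) * ((a:ℂ)/(b:ℂ)) * (x:ℂ)^2) * f x with hF
  set G : ℝ → ℂ := fun x => Complex.exp ((Complex.I/2) * ((a:ℂ)/(b:ℂ)) * (x:ℂ)^2) * g x with hG
  have hFi : Integrable F := hf.bdd_mul (c := 1) (by fun_prop)
    (Eventually.of_forall fun x => (cc_norm_exp a b x).le)
  have hGi : Integrable G := hg.bdd_mul (c := 1) (by fun_prop)
    (Eventually.of_forall fun x => (cc_norm_exp a b x).le)
  have hFn : ∀ x, ‖F x‖ = ‖f x‖ := fun x => by simp only [hF, norm_mul, cc_norm_exp, one_mul]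
  have hGn : ∀ x, ‖G x‖ = ‖g x‖ := fun x => by simp only [hG, norm_mul, cc_norm_exp, one_mul]
  have hK : ∀ t x, ccKernel a b f g t x =
      Complex.exp (-(Complex.I/2) * ((a:ℂ)/(b:ℂ)) * (t:ℂ)^2) *
        (F x * G (x + t) + F x * G (x - t)) := fun t x => by
    simp only [hF, hG, ccKernel]
    push_cast
    ring
  have hKi : Integrable (fun p : ℝ × ℝ => ccKernel a b f g p.2 p.1) (volume.prod volume) := by
    simp only [hK]
    exact ((cc_int_add F G hFi hGi).add (cc_int_sub F G hFi hGi)).bdd_mul (c := 1) (by fun_prop)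
      (Eventually.of_forall fun p => (cc_norm_exp_neg a b p.2).le)
  have hN1 := cc_int_add (fun x => ‖f x‖) (fun x => ‖g x‖) hf.norm hg.norm
  have hN2 := cc_int_sub (fun x => ‖f x‖) (fun x => ‖g x‖) hf.norm hg.norm
  have hconv : Integrable (ccConv a b f g) := hKi.integral_prod_right.const_mul _
  refine ⟨hKi.prod_left_ae, hconv, ?_⟩
  have hKn : ∀ t x, ‖ccKernel a b f g t x‖ ≤ ‖f x‖ * ‖g (x + t)‖ + ‖f x‖ * ‖g (x - t)‖ := by
    intro t x
    rw [hK, norm_mul, cc_norm_exp_neg, one_mul]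
    refine (norm_add_le _ _).trans ?_
    simp only [norm_mul, hFn, hGn, le_refl]
  have hN := hN1.add hN2
  have e1 : (∫ t : ℝ, ∫ x : ℝ, (‖f x‖ * ‖g (x + t)‖ + ‖f x‖ * ‖g (x - t)‖)) =
      2 * ((∫ t : ℝ, ‖f t‖) * (∫ t : ℝ, ‖g t‖)) := by
    have s1 := integral_prod_symm _ hN
    have s2 := integral_add hN1 hN2
    have s3 := integral_prod _ hN1
    have s4 := integral_prod _ hN2
    simp only [integral_const_mul, integral_mul_const] at s3 s4
    have a1 : ∀ x, ∫ t : ℝ, ‖g (x + t)‖ = ∫ t : ℝ, ‖g t‖ :=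
      fun x => integral_add_left_eq_self (fun t => ‖g t‖) x
    have a2 : ∀ x, ∫ t : ℝ, ‖g (x - t)‖ = ∫ t : ℝ, ‖g t‖ :=
      fun x => integral_sub_left_eq_self (fun t => ‖g t‖) volume x
    simp only [a1, a2, integral_mul_const] at s3 s4
    simp only [Pi.add_apply] at s1
    rw [← s1, s2, s3, s4]
    ring
  have key : (∫ t : ℝ, ‖ccConv a b f g t‖) ≤
      ∫ t : ℝ, (1/2 : ℝ) * ∫ x : ℝ, (‖f x‖ * ‖g (x + t)‖ + ‖f x‖ * ‖g (x - t)‖) := by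
    refine integral_mono_ae hconv.norm (hN.integral_prod_right.const_mul _) ?_
    filter_upwards [hN.prod_left_ae] with t ht
    have : ‖∫ x : ℝ, ccKernel a b f g t x‖ ≤
        ∫ x : ℝ, (‖f x‖ * ‖g (x + t)‖ + ‖f x‖ * ‖g (x - t)‖) :=
      norm_integral_le_of_norm_le ht (Eventually.of_forall (hKn t))
    simp only [ccConv, norm_mul]
    norm_num
    linarith
  rw [integral_const_mul, e1] at key
  linarith
end

section
/- Let a, b be real numbers with b ≠ 0 and let f, g ∈ L¹(ℝ, ℂ). Then f⋆g = g⋆f (the convolution ⋆ is commutative), i.e. (f⋆g)(t) = (g⋆f)(t) for almost every t ∈ ℝ. -/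
open MeasureTheory Filter

lemma cc_ae_int (F G : ℝ → ℂ) (hF : Integrable F) (hG : Integrable G) :
    ∀ᵐ t : ℝ, Integrable (fun x => F x * G (x - t)) := by
  have h := (hF.convolution_integrand (ContinuousLinearMap.mul ℝ ℂ) hG.comp_neg).prod_right_ae
  filter_upwards [h] with t ht
  simpa using ht

lemma cc_chirp_int (a b : ℝ) (f : ℝ → ℂ) (hf : Integrable f) :
    Integrable (fun x : ℝ => Complex.exp ((Complex.I/2) * ((a:ℂ)/(b:ℂ)) * (x:ℂ)^2) * f x) := by
  refine hf.bdd_mul (c := 1) (Continuous.aestronglyMeasurable (by fun_prop)) ?_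
  refine Filter.Eventually.of_forall fun x => ?_
  have : (Complex.I/2) * ((a:ℂ)/(b:ℂ)) * (x:ℂ)^2 = ((a / b * x^2 / 2 : ℝ) : ℂ) * Complex.I := by
    push_cast; ring
  rw [this, Complex.norm_exp_ofReal_mul_I]

theorem ccConv_comm (a b : ℝ) (hb : b ≠ 0) (f g : ℝ → ℂ)
    (hf : Integrable f) (hg : Integrable g) :
    ∀ᵐ t : ℝ, ccConv a b f g t = ccConv a b g f t := by
  have hF := cc_chirp_int a b f hf
  have hG := cc_chirp_int a b g hg
  have key : ∀ (f g : ℝ → ℂ) (t x : ℝ), ccKernel a b f g t x =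
      Complex.exp (-(Complex.I/2) * ((a:ℂ)/(b:ℂ)) * (t:ℂ)^2) *
      ((fun x : ℝ => Complex.exp ((Complex.I/2) * ((a:ℂ)/(b:ℂ)) * (x:ℂ)^2) * f x) x *
        (fun x : ℝ => Complex.exp ((Complex.I/2) * ((a:ℂ)/(b:ℂ)) * (x:ℂ)^2) * g x) (x + t) +
       (fun x : ℝ => Complex.exp ((Complex.I/2) * ((a:ℂ)/(b:ℂ)) * (x:ℂ)^2) * f x) x *
        (fun x : ℝ => Complex.exp ((Complex.I/2) * ((a:ℂ)/(b:ℂ)) * (x:ℂ)^2) * g x) (x - t)) := by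
    intro f g t x
    simp only [ccKernel]
    push_cast
    ring
  unfold ccConv
  have k1 := key f g
  have k2 := key g f
  clear key
  generalize (fun x : ℝ => Complex.exp ((Complex.I/2) * ((a:ℂ)/(b:ℂ)) * (x:ℂ)^2) * f x) = F at *
  generalize (fun x : ℝ => Complex.exp ((Complex.I/2) * ((a:ℂ)/(b:ℂ)) * (x:ℂ)^2) * g x) = G at *
  filter_upwards [cc_ae_int F G hF hG, cc_ae_int G F hG hF] with t h1 h2
  have h3 : Integrable (fun x => F x * G (x + t)) := by
    simpa [mul_comm] using h2.comp_add_right t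
  have h4 : Integrable (fun x => G x * F (x + t)) := by
    simpa [mul_comm] using h1.comp_add_right t
  have e1 : ∫ x, F x * G (x + t) = ∫ x, G x * F (x - t) := by
    rw [← integral_add_right_eq_self (fun x => G x * F (x - t)) t]
    simp [mul_comm]
  have e2 : ∫ x, G x * F (x + t) = ∫ x, F x * G (x - t) := by
    rw [← integral_add_right_eq_self (fun x => F x * G (x - t)) t]
    simp [mul_comm]
  simp_rw [k1, k2]
  rw [integral_const_mul, integral_const_mul, integral_add h3 h1, integral_add h4 h2, e1, e2,
    add_comm]
end

section
/- Let a, b be real numbers with b ≠ 0 and let f, g ∈ L¹(ℝ, ℂ). Then the function t ↦ (fΘg)(t) is defined almost everywhere, belongs to L¹(ℝ, ℂ), and satisfies ‖fΘg‖₁ ≤ ‖f‖₁·‖g‖₁. -/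
open MeasureTheory Filter

noncomputable def thKernel (a b : ℝ) (f g : ℝ → ℂ) (t x : ℝ) : ℂ :=
  Complex.exp (-(Complex.I/2) * ((a:ℂ)/(b:ℂ)) * (t:ℂ)^2) *
    Complex.exp ((Complex.I/2) * ((a:ℂ)/(b:ℂ)) * (x:ℂ)^2) * f x *
    (Complex.exp ((Complex.I/2) * ((a:ℂ)/(b:ℂ)) * ((x:ℂ)-(t:ℂ))^2) * g (x-t) -
     Complex.exp ((Complex.I/2) * ((a:ℂ)/(b:ℂ)) * ((x:ℂ)+(t:ℂ))^2) * g (x+t))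

noncomputable def thConv (a b : ℝ) (f g : ℝ → ℂ) (t : ℝ) : ℂ :=
  (1/2 : ℂ) * ∫ x : ℝ, thKernel a b f g t x

theorem th_aux_exp (r : ℂ) (s : ℝ) (h : r = s * Complex.I) : ‖Complex.exp r‖ = 1 := by
  rw [h]; exact Complex.norm_exp_ofReal_mul_I s

theorem th_aux_mp_sub : MeasurePreserving (fun p : ℝ × ℝ => (p.2, p.2 - p.1))
    (volume.prod volume) (volume.prod volume) := by
  have h1 : MeasurePreserving (fun p : ℝ × ℝ => (p.1, p.1 - p.2))
      (volume.prod volume) (volume.prod volume) := by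
    refine MeasurePreserving.skew_product (f := id) (g := fun x y : ℝ => x - y)
      (MeasurePreserving.id _) (by fun_prop) ?_
    exact Eventually.of_forall fun x => (volume.measurePreserving_sub_left x).map_eq
  exact h1.comp Measure.measurePreserving_swap

theorem th_aux_mp_add : MeasurePreserving (fun p : ℝ × ℝ => (p.2, p.2 + p.1))
    (volume.prod volume) (volume.prod volume) := by
  have h1 : MeasurePreserving (fun p : ℝ × ℝ => (p.1, p.1 + p.2))
      (volume.prod volume) (volume.prod volume) := by
    refine MeasurePreserving.skew_product (f := id) (g := fun x y : ℝ => x + y)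
      (MeasurePreserving.id _) (by fun_prop) ?_
    exact Eventually.of_forall fun x => (measurePreserving_add_left volume x).map_eq
  exact h1.comp Measure.measurePreserving_swap

theorem thConv_memL1 (a b : ℝ) (hb : b ≠ 0) (f g : ℝ → ℂ)
    (hf : Integrable f) (hg : Integrable g) :
    (∀ᵐ t : ℝ, Integrable (fun x => thKernel a b f g t x)) ∧
    Integrable (thConv a b f g) ∧
    (∫ t : ℝ, ‖thConv a b f g t‖) ≤ (∫ t : ℝ, ‖f t‖) * (∫ t : ℝ, ‖g t‖) := by
  have hfg := hf.mul_prod hg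
  have i1 : Integrable (fun p : ℝ × ℝ => f p.2 * g (p.2 - p.1)) (volume.prod volume) :=
    th_aux_mp_sub.integrable_comp_of_integrable hfg
  have i2 : Integrable (fun p : ℝ × ℝ => f p.2 * g (p.2 + p.1)) (volume.prod volume) :=
    th_aux_mp_add.integrable_comp_of_integrable hfg
  have e1 : ∀ t : ℝ, ‖Complex.exp (-(Complex.I/2) * ((a:ℂ)/(b:ℂ)) * (t:ℂ)^2)‖ = 1 := fun t =>
    th_aux_exp _ (-(1/2) * (a/b) * t^2) (by push_cast; ring)
  have e2 : ∀ t : ℝ, ‖Complex.exp ((Complex.I/2) * ((a:ℂ)/(b:ℂ)) * (t:ℂ)^2)‖ = 1 := fun t =>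
    th_aux_exp _ ((1/2) * (a/b) * t^2) (by push_cast; ring)
  have e3 : ∀ x t : ℝ, ‖Complex.exp ((Complex.I/2) * ((a:ℂ)/(b:ℂ)) * ((x:ℂ)-(t:ℂ))^2)‖ = 1 :=
    fun x t => by have := e2 (x - t); push_cast at this; exact this
  have e4 : ∀ x t : ℝ, ‖Complex.exp ((Complex.I/2) * ((a:ℂ)/(b:ℂ)) * ((x:ℂ)+(t:ℂ))^2)‖ = 1 :=
    fun x t => by have := e2 (x + t); push_cast at this; exact this
  have bd : ∀ t x : ℝ, ‖thKernel a b f g t x‖ ≤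
      ‖f x * g (x - t)‖ + ‖f x * g (x + t)‖ := by
    intro t x
    unfold thKernel
    rw [norm_mul, norm_mul, norm_mul, e1, e2, one_mul, one_mul, norm_mul, norm_mul, ← mul_add]
    refine mul_le_mul_of_nonneg_left ?_ (norm_nonneg _)
    refine (norm_sub_le _ _).trans ?_
    rw [norm_mul, norm_mul, e3, e4, one_mul, one_mul]
  have mK : AEStronglyMeasurable (fun p : ℝ × ℝ => thKernel a b f g p.1 p.2)
      (volume.prod volume) := by
    have hc : AEStronglyMeasurable (fun p : ℝ × ℝ =>
        (Complex.exp (-(Complex.I/2) * ((a:ℂ)/(b:ℂ)) * (p.1:ℂ)^2) *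
         Complex.exp ((Complex.I/2) * ((a:ℂ)/(b:ℂ)) * (p.2:ℂ)^2)) *
        (Complex.exp ((Complex.I/2) * ((a:ℂ)/(b:ℂ)) * ((p.2:ℂ)-(p.1:ℂ))^2) *
          (f p.2 * g (p.2 - p.1)) -
         Complex.exp ((Complex.I/2) * ((a:ℂ)/(b:ℂ)) * ((p.2:ℂ)+(p.1:ℂ))^2) *
          (f p.2 * g (p.2 + p.1)))) (volume.prod volume) := by
      refine AEStronglyMeasurable.mul ?_ (AEStronglyMeasurable.sub
        (AEStronglyMeasurable.mul ?_ i1.1) (AEStronglyMeasurable.mul ?_ i2.1)) <;>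
      exact Continuous.aestronglyMeasurable (by fun_prop)
    refine hc.congr (Eventually.of_forall fun p => ?_)
    simp only [thKernel]; ring
  have iB := i1.norm.add i2.norm
  have iK : Integrable (fun p : ℝ × ℝ => thKernel a b f g p.1 p.2) (volume.prod volume) :=
    iB.mono' mK (Eventually.of_forall fun p => bd p.1 p.2)
  have s1 : ∫ t : ℝ, ∫ x : ℝ, ‖f x * g (x - t)‖ = (∫ t : ℝ, ‖f t‖) * (∫ t : ℝ, ‖g t‖) := by
    rw [integral_integral_swap i1.norm, ← integral_mul_const]
    refine integral_congr_ae (Eventually.of_forall fun x => ?_)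
    simp only [norm_mul, integral_const_mul]
    rw [integral_sub_left_eq_self (fun y => ‖g y‖) volume x]
  have s2 : ∫ t : ℝ, ∫ x : ℝ, ‖f x * g (x + t)‖ = (∫ t : ℝ, ‖f t‖) * (∫ t : ℝ, ‖g t‖) := by
    rw [integral_integral_swap i2.norm, ← integral_mul_const]
    refine integral_congr_ae (Eventually.of_forall fun x => ?_)
    simp only [norm_mul, integral_const_mul]
    rw [integral_add_left_eq_self (fun y => ‖g y‖) x]
  have iC : Integrable (thConv a b f g) := iK.integral_prod_left.const_mul (1/2 : ℂ)
  refine ⟨iK.prod_right_ae, iC, ?_⟩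
  have j1 := i1.norm.integral_prod_left
  have j2 := i2.norm.integral_prod_left
  have key : ∫ t : ℝ, ‖thConv a b f g t‖ ≤ ∫ t : ℝ, (1/2 : ℝ) *
      ((∫ x : ℝ, ‖f x * g (x - t)‖) + ∫ x : ℝ, ‖f x * g (x + t)‖) := by
    refine integral_mono_ae iC.norm ((j1.add j2).const_mul _) ?_
    filter_upwards [i1.norm.prod_right_ae, i2.norm.prod_right_ae] with t h1 h2
    have h3 : ‖∫ x : ℝ, thKernel a b f g t x‖ ≤
        (∫ x : ℝ, ‖f x * g (x - t)‖) + ∫ x : ℝ, ‖f x * g (x + t)‖ := by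
      rw [← integral_add h1 h2]
      exact norm_integral_le_of_norm_le (h1.add h2) (Eventually.of_forall fun x => bd t x)
    have h4 : ‖(1/2 : ℂ)‖ = 1/2 := by norm_num
    simp only [thConv, norm_mul, h4] at h3 ⊢
    exact mul_le_mul_of_nonneg_left h3 (by norm_num)
  refine key.trans (le_of_eq ?_)
  rw [integral_const_mul, integral_add j1 j2, s1, s2]
  ring
end

section
/- Let a, b, c, d be real numbers with ad − bc = 1 and b ≠ 0, and let f ∈ L¹(ℝ, ℂ). Then for every real x and every s ∈ ℝ, C_A(cos(x·t) f(t))(s) = (e^{-(i/2)·d·b·x²}/2) · ( e^{-i·d·x·s} · C_A f(s + bx) + e^{i·d·x·s} · C_A f(s − bx) ). -/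
open MeasureTheory Filter

noncomputable def sqrtTwoPiIb (b : ℝ) : ℂ := (2 * (Real.pi : ℂ) * Complex.I * (b:ℂ)) ^ ((1:ℂ)/2)

noncomputable def CCT (a b d : ℝ) (f : ℝ → ℂ) (s : ℝ) : ℂ :=
  (1 / sqrtTwoPiIb b) * Complex.exp ((Complex.I/2) * ((d:ℂ)/(b:ℂ)) * (s:ℂ)^2) *
    ∫ t : ℝ, (Real.cos ((s/b) * t) : ℂ) *
      Complex.exp ((Complex.I/2) * ((a:ℂ)/(b:ℂ)) * (t:ℂ)^2) * f t

theorem cct_cos_mul (a b c d : ℝ) (hb : b ≠ 0) (hA : a * d - b * c = 1)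
    (f : ℝ → ℂ) (hf : Integrable f) :
    ∀ x s : ℝ, CCT a b d (fun t => (Real.cos (x * t) : ℂ) * f t) s =
      (Complex.exp (-(Complex.I/2) * (d:ℂ) * (b:ℂ) * (x:ℂ)^2) / 2) *
        (Complex.exp (-Complex.I * (d:ℂ) * (x:ℂ) * (s:ℂ)) * CCT a b d f (s + b * x) +
         Complex.exp (Complex.I * (d:ℂ) * (x:ℂ) * (s:ℂ)) * CCT a b d f (s - b * x)) := by
  intro x s
  have hbc : (b : ℂ) ≠ 0 := by exact_mod_cast hb
  have hint : ∀ u : ℝ, Integrable (fun t : ℝ => (Real.cos (u * t) : ℂ) *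
      Complex.exp ((Complex.I/2) * ((a:ℂ)/(b:ℂ)) * (t:ℂ)^2) * f t) := by
    intro u
    refine hf.bdd_mul (c := 1) (Continuous.aestronglyMeasurable (by fun_prop)) ?_
    refine Filter.Eventually.of_forall fun t => ?_
    have h2 : ‖Complex.exp ((Complex.I/2) * ((a:ℂ)/(b:ℂ)) * (t:ℂ)^2)‖ = 1 := by
      have : (Complex.I/2) * ((a:ℂ)/(b:ℂ)) * (t:ℂ)^2 = ((a / b * t ^ 2 / 2 : ℝ) : ℂ) * Complex.I := by
        push_cast; ring
      rw [this, Complex.norm_exp_ofReal_mul_I]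
    rw [norm_mul, h2, mul_one, Complex.norm_real]
    exact Real.abs_cos_le_one _
  have hI : (∫ t : ℝ, (Real.cos ((s/b) * t) : ℂ) *
      Complex.exp ((Complex.I/2) * ((a:ℂ)/(b:ℂ)) * (t:ℂ)^2) * ((Real.cos (x * t) : ℂ) * f t)) =
      (1/2) * ((∫ t : ℝ, (Real.cos (((s + b * x)/b) * t) : ℂ) *
      Complex.exp ((Complex.I/2) * ((a:ℂ)/(b:ℂ)) * (t:ℂ)^2) * f t) +
      ∫ t : ℝ, (Real.cos (((s - b * x)/b) * t) : ℂ) *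
      Complex.exp ((Complex.I/2) * ((a:ℂ)/(b:ℂ)) * (t:ℂ)^2) * f t) := by
    rw [← integral_add (hint _) (hint _), ← integral_const_mul]
    congr 1
    funext t
    have e1 : (s + b * x)/b * t = s / b * t + x * t := by field_simp
    have e2 : (s - b * x)/b * t = s / b * t - x * t := by field_simp
    rw [e1, e2, Real.cos_add, Real.cos_sub]
    push_cast
    ring
  have hp : Complex.exp ((Complex.I/2) * ((d:ℂ)/(b:ℂ)) * (s:ℂ)^2) =
      Complex.exp (-(Complex.I/2) * (d:ℂ) * (b:ℂ) * (x:ℂ)^2) *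
      Complex.exp (-Complex.I * (d:ℂ) * (x:ℂ) * (s:ℂ)) *
      Complex.exp ((Complex.I/2) * ((d:ℂ)/(b:ℂ)) * ((s + b * x : ℝ):ℂ)^2) := by
    rw [← Complex.exp_add, ← Complex.exp_add]
    congr 1
    push_cast
    field_simp
    ring
  have hm : Complex.exp ((Complex.I/2) * ((d:ℂ)/(b:ℂ)) * (s:ℂ)^2) =
      Complex.exp (-(Complex.I/2) * (d:ℂ) * (b:ℂ) * (x:ℂ)^2) *
      Complex.exp (Complex.I * (d:ℂ) * (x:ℂ) * (s:ℂ)) *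
      Complex.exp ((Complex.I/2) * ((d:ℂ)/(b:ℂ)) * ((s - b * x : ℝ):ℂ)^2) := by
    rw [← Complex.exp_add, ← Complex.exp_add]
    congr 1
    push_cast
    field_simp
    ring
  unfold CCT
  rw [hI]
  generalize (∫ t : ℝ, (Real.cos (((s + b * x)/b) * t) : ℂ) *
      Complex.exp ((Complex.I/2) * ((a:ℂ)/(b:ℂ)) * (t:ℂ)^2) * f t) = P
  generalize (∫ t : ℝ, (Real.cos (((s - b * x)/b) * t) : ℂ) *
      Complex.exp ((Complex.I/2) * ((a:ℂ)/(b:ℂ)) * (t:ℂ)^2) * f t) = M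
  linear_combination (1 / sqrtTwoPiIb b) * (1/2) * P * hp + (1 / sqrtTwoPiIb b) * (1/2) * M * hm
end

section
/- Let a, b, c, d be real numbers with ad − bc = 1 and b ≠ 0, and let f ∈ L¹(ℝ, ℂ). Then for every real x and every s ∈ ℝ, S_A(cos(x·t) f(t))(s) = (e^{-(i/2)·d·b·x²}/2) · ( e^{-i·d·x·s} · S_A f(s + bx) + e^{i·d·x·s} · S_A f(s − bx) ). -/
open MeasureTheory Filter

noncomputable def SCT (a b d : ℝ) (f : ℝ → ℂ) (s : ℝ) : ℂ :=
  (1 / sqrtTwoPiIb b) * Complex.exp ((Complex.I/2) * ((d:ℂ)/(b:ℂ)) * (s:ℂ)^2) *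
    ∫ t : ℝ, (Real.sin ((s/b) * t) : ℂ) *
      Complex.exp ((Complex.I/2) * ((a:ℂ)/(b:ℂ)) * (t:ℂ)^2) * f t

lemma sct_integrable_aux (a b : ℝ) (f : ℝ → ℂ) (hf : Integrable f) (u : ℝ) :
    Integrable (fun t : ℝ => (Real.sin (u * t) : ℂ) *
      Complex.exp ((Complex.I/2) * ((a:ℂ)/(b:ℂ)) * (t:ℂ)^2) * f t) := by
  refine hf.bdd_mul (c := 1) ?_ ?_
  · exact Continuous.aestronglyMeasurable (by fun_prop)
  · refine Eventually.of_forall fun t => ?_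
    have h : (Complex.I/2) * ((a:ℂ)/(b:ℂ)) * (t:ℂ)^2 = ((a / b * t^2 / 2 : ℝ) : ℂ) * Complex.I := by
      push_cast; ring
    rw [norm_mul, h, Complex.norm_exp_ofReal_mul_I, mul_one, Complex.norm_real]
    exact Real.abs_sin_le_one _

theorem sct_cos_mul (a b c d : ℝ) (hb : b ≠ 0) (hA : a * d - b * c = 1)
    (f : ℝ → ℂ) (hf : Integrable f) :
    ∀ x s : ℝ, SCT a b d (fun t => (Real.cos (x * t) : ℂ) * f t) s =
      (Complex.exp (-(Complex.I/2) * (d:ℂ) * (b:ℂ) * (x:ℂ)^2) / 2) *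
        (Complex.exp (-Complex.I * (d:ℂ) * (x:ℂ) * (s:ℂ)) * SCT a b d f (s + b * x) +
         Complex.exp (Complex.I * (d:ℂ) * (x:ℂ) * (s:ℂ)) * SCT a b d f (s - b * x)) := by
  intro x s
  have hbc : (b:ℂ) ≠ 0 := by exact_mod_cast hb
  unfold SCT
  have key : (∫ t : ℝ, (Real.sin ((s/b) * t) : ℂ) *
      Complex.exp ((Complex.I/2) * ((a:ℂ)/(b:ℂ)) * (t:ℂ)^2) * ((Real.cos (x * t) : ℂ) * f t)) =
      (1/2) * ((∫ t : ℝ, (Real.sin (((s + b * x)/b) * t) : ℂ) *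
      Complex.exp ((Complex.I/2) * ((a:ℂ)/(b:ℂ)) * (t:ℂ)^2) * f t) +
      ∫ t : ℝ, (Real.sin (((s - b * x)/b) * t) : ℂ) *
      Complex.exp ((Complex.I/2) * ((a:ℂ)/(b:ℂ)) * (t:ℂ)^2) * f t) := by
    rw [← integral_add (sct_integrable_aux a b f hf _) (sct_integrable_aux a b f hf _),
      ← integral_const_mul]
    congr 1
    ext t
    have h1 : (s + b * x)/b * t = s/b*t + x*t := by field_simp
    have h2 : (s - b * x)/b * t = s/b*t - x*t := by field_simp
    rw [h1, h2, Real.sin_add, Real.sin_sub]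
    push_cast
    ring
  rw [key]
  have e1 : Complex.exp ((Complex.I/2) * ((d:ℂ)/(b:ℂ)) * (s:ℂ)^2) =
      Complex.exp (-(Complex.I/2) * (d:ℂ) * (b:ℂ) * (x:ℂ)^2) *
      Complex.exp (-Complex.I * (d:ℂ) * (x:ℂ) * (s:ℂ)) *
      Complex.exp ((Complex.I/2) * ((d:ℂ)/(b:ℂ)) * ((s + b * x : ℝ):ℂ)^2) := by
    rw [← Complex.exp_add, ← Complex.exp_add]
    congr 1
    push_cast
    field_simp
    ring
  have e2 : Complex.exp ((Complex.I/2) * ((d:ℂ)/(b:ℂ)) * (s:ℂ)^2) =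
      Complex.exp (-(Complex.I/2) * (d:ℂ) * (b:ℂ) * (x:ℂ)^2) *
      Complex.exp (Complex.I * (d:ℂ) * (x:ℂ) * (s:ℂ)) *
      Complex.exp ((Complex.I/2) * ((d:ℂ)/(b:ℂ)) * ((s - b * x : ℝ):ℂ)^2) := by
    rw [← Complex.exp_add, ← Complex.exp_add]
    congr 1
    push_cast
    field_simp
    ring
  generalize (∫ t : ℝ, (Real.sin (((s + b * x)/b) * t) : ℂ) *
      Complex.exp ((Complex.I/2) * ((a:ℂ)/(b:ℂ)) * (t:ℂ)^2) * f t) = P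
  generalize (∫ t : ℝ, (Real.sin (((s - b * x)/b) * t) : ℂ) *
      Complex.exp ((Complex.I/2) * ((a:ℂ)/(b:ℂ)) * (t:ℂ)^2) * f t) = Q
  linear_combination (1 / sqrtTwoPiIb b) * (1/2) * P * e1 + (1 / sqrtTwoPiIb b) * (1/2) * Q * e2
end

section
/- (Scaling property.) Let a, b, c, d be real numbers with ad − bc = 1 and b ≠ 0, let f ∈ L¹(ℝ, ℂ), and let k > 0. Then for every s ∈ ℝ, C_A(f(k·t))(s) = (1/k) · e^{(1 − 1/k²)·(i/2)·(d/b)·s²} · C_A( e^{(1/k² − 1)·(i/2)·(a/b)·t²} f(t) )(s/k). -/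
open MeasureTheory Filter

theorem cct_scaling (a b c d : ℝ) (hb : b ≠ 0) (hA : a * d - b * c = 1)
    (f : ℝ → ℂ) (hf : Integrable f) (k : ℝ) (hk : 0 < k) :
    ∀ s : ℝ, CCT a b d (fun t => f (k * t)) s =
      (1 / (k:ℂ)) * Complex.exp ((1 - 1/(k:ℂ)^2) * (Complex.I/2) * ((d:ℂ)/(b:ℂ)) * (s:ℂ)^2) *
        CCT a b d (fun t => Complex.exp ((1/(k:ℂ)^2 - 1) * (Complex.I/2) * ((a:ℂ)/(b:ℂ)) * (t:ℂ)^2) * f t)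
          (s / k) := by
  intro s
  have hk' : (k:ℂ) ≠ 0 := by exact_mod_cast hk.ne'
  have hb' : (b:ℂ) ≠ 0 := by exact_mod_cast hb
  have key := Measure.integral_comp_mul_left (fun t : ℝ => (Real.cos ((s/k/b) * t) : ℂ) *
      Complex.exp ((Complex.I/2) * ((a:ℂ)/(b:ℂ)) * (t:ℂ)^2) *
      (Complex.exp ((1/(k:ℂ)^2 - 1) * (Complex.I/2) * ((a:ℂ)/(b:ℂ)) * (t:ℂ)^2) * f t)) k
  have h1 : ∀ t : ℝ, (Real.cos ((s/k/b) * (k * t)) : ℂ) *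
      Complex.exp ((Complex.I/2) * ((a:ℂ)/(b:ℂ)) * ((k * t : ℝ):ℂ)^2) *
      (Complex.exp ((1/(k:ℂ)^2 - 1) * (Complex.I/2) * ((a:ℂ)/(b:ℂ)) * ((k * t : ℝ):ℂ)^2) * f (k * t))
      = (Real.cos ((s/b) * t) : ℂ) *
      Complex.exp ((Complex.I/2) * ((a:ℂ)/(b:ℂ)) * (t:ℂ)^2) * f (k * t) := by
    intro t
    have e1 : s/k/b * (k * t) = s/b * t := by
      have := hk.ne'
      field_simp
    rw [e1, mul_assoc, ← mul_assoc (Complex.exp _), ← Complex.exp_add, ← mul_assoc]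
    congr 3
    push_cast
    field_simp
    ring
  simp only [h1] at key
  unfold CCT
  rw [key, abs_of_pos (inv_pos.mpr hk), Complex.real_smul]
  have e2 : Complex.exp ((Complex.I/2) * ((d:ℂ)/(b:ℂ)) * (s:ℂ)^2) =
      Complex.exp ((1 - 1/(k:ℂ)^2) * (Complex.I/2) * ((d:ℂ)/(b:ℂ)) * (s:ℂ)^2) *
      Complex.exp ((Complex.I/2) * ((d:ℂ)/(b:ℂ)) * ((s / k : ℝ):ℂ)^2) := by
    rw [← Complex.exp_add]
    congr 1
    push_cast
    field_simp
    ring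
  rw [e2]
  push_cast
  ring
end
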